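/- Let I ⊆ ℝ be an open interval, p, q₀, r₀ : I → ℝ smooth, b₁, …, bₙ : I → ℝ smooth and nonvanishing, and υₖ : I → ℝ smooth (k = 1, …, n). Set σₖ = Σ_{j=1}^{k} bⱼ'/bⱼ and sₖ = b₁·b₂⋯bₖ. Define qₖ = q₀ + k·p' - 2p·σₖ, rₖ = r₀ + k·q₀' + ½k(k-1)p'' + υₖ·p' - σₖ·(q₀ + k·p') + (σₖ² - σₖ' + 2υₖ')·p, Tₖ y = p·y'' + qₖ·y' + rₖ·y, and also q̃ₖ = q₀ + k·p', r̃ₖ = r₀ + k·q₀' + ½k(k-1)p'' + υₖ·p' + 2υₖ'·p, T̃ₖ y = p·y'' + q̃ₖ·y' + r̃ₖ·y. Then for each k = 1, …, n and every smooth y : I → ℝ, Tₖ y = sₖ · T̃ₖ(y / sₖ) on I; that is, Tₖ = sₖ T̃ₖ sₖ⁻¹ as operators. -/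

import Mathlib

/-!
The logarithmic derivative of `s = sₖ` is `σ = σₖ`, so conjugation by `s` replaces `D` by `D - σ`:
`s D s⁻¹ = D - σ` and `s D² s⁻¹ = (D - σ)² = D² - 2σ D + σ² - σ'`. Collecting coefficients in
`p (D - σ)² + q̃ₖ (D - σ) + r̃ₖ` gives exactly `qₖ` and `rₖ`.
-/

open Set

/-- Second-order operator `T = pD² + qD + r`. -/
noncomputable def secondOrderOp (p q r : ℝ → ℝ) (y : ℝ → ℝ) (z : ℝ) : ℝ :=
  p z * deriv (deriv y) z + q z * deriv y z + r z * y z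

/-- `σ k = ∑_{j=1}^k bⱼ'/bⱼ`. -/
noncomputable def sigmaGauge (bf : ℕ → ℝ → ℝ) (k : ℕ) (z : ℝ) : ℝ :=
  ∑ j ∈ Finset.Icc 1 k, deriv (bf j) z / bf j z

/-- `s k = b₁ b₂ ⋯ bₖ`. -/
noncomputable def sGauge (bf : ℕ → ℝ → ℝ) (k : ℕ) (z : ℝ) : ℝ :=
  ∏ j ∈ Finset.Icc 1 k, bf j z

/-- `qₖ = q₀ + k p' - 2 p σₖ`. -/
noncomputable def qCoeff (p q₀ : ℝ → ℝ) (bf : ℕ → ℝ → ℝ) (k : ℕ) (z : ℝ) : ℝ :=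
  q₀ z + k * deriv p z - 2 * p z * sigmaGauge bf k z

/-- `rₖ = r₀ + k q₀' + ½k(k-1)p'' + υₖ p' - σₖ(q₀ + k p') + (σₖ² - σₖ' + 2υₖ')p`. -/
noncomputable def rCoeff (p q₀ r₀ : ℝ → ℝ) (bf : ℕ → ℝ → ℝ) (υ : ℕ → ℝ → ℝ)
    (k : ℕ) (z : ℝ) : ℝ :=
  r₀ z + k * deriv q₀ z + (1 / 2 : ℝ) * k * (k - 1) * deriv (deriv p) z
    + υ k z * deriv p z - sigmaGauge bf k z * (q₀ z + k * deriv p z)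
    + ((sigmaGauge bf k z) ^ 2 - deriv (sigmaGauge bf k) z + 2 * deriv (υ k) z) * p z

/-- `q̃ₖ = q₀ + k p'`. -/
noncomputable def qTilde (p q₀ : ℝ → ℝ) (k : ℕ) (z : ℝ) : ℝ :=
  q₀ z + k * deriv p z

/-- `r̃ₖ = r₀ + k q₀' + ½k(k-1)p'' + υₖ p' + 2 υₖ' p`. -/
noncomputable def rTilde (p q₀ r₀ : ℝ → ℝ) (υ : ℕ → ℝ → ℝ) (k : ℕ) (z : ℝ) : ℝ :=
  r₀ z + k * deriv q₀ z + (1 / 2 : ℝ) * k * (k - 1) * deriv (deriv p) z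
    + υ k z * deriv p z + 2 * deriv (υ k) z * p z

open scoped Topology

section LogDeriv

variable {𝕜 𝕜' : Type*} [NontriviallyNormedField 𝕜] [NontriviallyNormedField 𝕜']
  [NormedAlgebra 𝕜 𝕜'] {y s : 𝕜 → 𝕜'} {z : 𝕜}

theorem deriv_fun_div_eq_sub_logDeriv_mul_div (hy : DifferentiableAt 𝕜 y z)
    (hs : DifferentiableAt 𝕜 s z) (hs0 : s z ≠ 0) :
    deriv (fun x => y x / s x) z = (deriv y z - logDeriv s z * y z) / s z := by
  rw [deriv_fun_div hy hs hs0, logDeriv_apply]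
  field_simp

theorem differentiableAt_deriv_of_contDiffAt_two (hs : ContDiffAt 𝕜 2 s z) :
    DifferentiableAt 𝕜 (deriv s) z :=
  (hs.derivWithin (m := 1) (by norm_num)).differentiableAt one_ne_zero

theorem deriv_deriv_fun_div (hy : ContDiffAt 𝕜 2 y z) (hs : ContDiffAt 𝕜 2 s z)
    (hs0 : s z ≠ 0) :
    deriv (deriv fun x => y x / s x) z =
      (deriv (deriv y) z - 2 * logDeriv s z * deriv y z
        + (logDeriv s z ^ 2 - deriv (logDeriv s) z) * y z) / s z := by
  have hyz : DifferentiableAt 𝕜 y z := hy.differentiableAt two_ne_zero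
  have hsz : DifferentiableAt 𝕜 s z := hs.differentiableAt two_ne_zero
  have hy' : DifferentiableAt 𝕜 (deriv y) z := differentiableAt_deriv_of_contDiffAt_two hy
  have hσ : DifferentiableAt 𝕜 (logDeriv s) z :=
    (differentiableAt_deriv_of_contDiffAt_two hs).div hsz hs0
  have first : deriv (fun x => y x / s x) =ᶠ[𝓝 z]
      fun x => (deriv y x - logDeriv s x * y x) / s x := by
    filter_upwards [hy.eventually (by simp), hs.eventually (by simp),
      hs.continuousAt.eventually_ne hs0] with x hyx hsx hsx0
    exact deriv_fun_div_eq_sub_logDeriv_mul_div (hyx.differentiableAt two_ne_zero)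
      (hsx.differentiableAt two_ne_zero) hsx0
  rw [first.deriv_eq,
    deriv_fun_div_eq_sub_logDeriv_mul_div (hy'.fun_sub (hσ.fun_mul hyz)) hsz hs0,
    deriv_fun_sub hy' (hσ.fun_mul hyz), deriv_fun_mul hσ hyz]
  ring

end LogDeriv

theorem mul_secondOrderOp_fun_div (p q r : ℝ → ℝ) {y s : ℝ → ℝ} {z : ℝ}
    (hy : ContDiffAt ℝ 2 y z) (hs : ContDiffAt ℝ 2 s z) (hs0 : s z ≠ 0) :
    s z * secondOrderOp p q r (fun x => y x / s x) z =
      secondOrderOp p (fun x => q x - 2 * p x * logDeriv s x)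
        (fun x => r x - logDeriv s x * q x + (logDeriv s x ^ 2 - deriv (logDeriv s) x) * p x)
        y z := by
  rw [secondOrderOp, secondOrderOp, deriv_deriv_fun_div hy hs hs0,
    deriv_fun_div_eq_sub_logDeriv_mul_div (hy.differentiableAt two_ne_zero)
      (hs.differentiableAt two_ne_zero) hs0]
  field_simp
  ring

section Gauge

variable {bf : ℕ → ℝ → ℝ} {k : ℕ} {z : ℝ}

theorem logDeriv_sGauge_eventuallyEq
    (hb : ∀ j ∈ Finset.Icc 1 k, ∀ᶠ x in 𝓝 z, DifferentiableAt ℝ (bf j) x)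
    (hb0 : ∀ j ∈ Finset.Icc 1 k, bf j z ≠ 0) :
    logDeriv (sGauge bf k) =ᶠ[𝓝 z] sigmaGauge bf k := by
  have hne : ∀ j ∈ Finset.Icc 1 k, ∀ᶠ x in 𝓝 z, bf j x ≠ 0 := fun j hj =>
    (hb j hj).self_of_nhds.continuousAt.eventually_ne (hb0 j hj)
  filter_upwards [(Finset.eventually_all _).2 hb, (Finset.eventually_all _).2 hne]
    with x hbx hnex using logDeriv_prod hnex hbx

theorem rCoeff_eq_rTilde_sub (p q₀ r₀ : ℝ → ℝ) (bf υ : ℕ → ℝ → ℝ) (k : ℕ) :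
    rCoeff p q₀ r₀ bf υ k = fun x => rTilde p q₀ r₀ υ k x - sigmaGauge bf k x * qTilde p q₀ k x
      + (sigmaGauge bf k x ^ 2 - deriv (sigmaGauge bf k) x) * p x := by
  funext x
  simp only [rCoeff, rTilde, qTilde]
  ring

theorem statement5_general (p q r : ℝ → ℝ) {y : ℝ → ℝ}
    (hb : ∀ j ∈ Finset.Icc 1 k, ContDiffAt ℝ 2 (bf j) z)
    (hb0 : ∀ j ∈ Finset.Icc 1 k, bf j z ≠ 0) (hy : ContDiffAt ℝ 2 y z) :
    secondOrderOp p (fun x => q x - 2 * p x * sigmaGauge bf k x)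
        (fun x => r x - sigmaGauge bf k x * q x
          + (sigmaGauge bf k x ^ 2 - deriv (sigmaGauge bf k) x) * p x) y z
      = sGauge bf k z * secondOrderOp p q r (fun x => y x / sGauge bf k x) z := by
  have hσ : logDeriv (sGauge bf k) =ᶠ[𝓝 z] sigmaGauge bf k :=
    logDeriv_sGauge_eventuallyEq (fun j hj => ((hb j hj).eventually (by simp)).mono
      fun _ h => h.differentiableAt two_ne_zero) hb0
  have hs : ContDiffAt ℝ 2 (sGauge bf k) z := contDiffAt_prod hb
  have hs0 : sGauge bf k z ≠ 0 := Finset.prod_ne_zero_iff.2 hb0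
  rw [mul_secondOrderOp_fun_div p q r hy hs hs0]
  simp only [secondOrderOp, hσ.eq_of_nhds, hσ.deriv_eq]

end Gauge

/-- gauge transformation — `Tₖ = sₖ T̃ₖ sₖ⁻¹`, i.e.
`Tₖ y = sₖ · T̃ₖ (y / sₖ)` on the interval, for each `k = 1, …, n`. -/
theorem statement5 (n : ℕ) (a b : ℝ) (hab : a < b)
    (p q₀ r₀ : ℝ → ℝ) (bf υ : ℕ → ℝ → ℝ)
    (hp : ContDiffOn ℝ (⊤ : ℕ∞) p (Ioo a b)) (hq₀ : ContDiffOn ℝ (⊤ : ℕ∞) q₀ (Ioo a b))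
    (hr₀ : ContDiffOn ℝ (⊤ : ℕ∞) r₀ (Ioo a b))
    (hb : ∀ j ∈ Finset.Icc 1 n, ContDiffOn ℝ (⊤ : ℕ∞) (bf j) (Ioo a b))
    (hb0 : ∀ j ∈ Finset.Icc 1 n, ∀ z ∈ Ioo a b, bf j z ≠ 0)
    (hυ : ∀ k ∈ Finset.Icc 1 n, ContDiffOn ℝ (⊤ : ℕ∞) (υ k) (Ioo a b)) :
    ∀ k ∈ Finset.Icc 1 n, ∀ y : ℝ → ℝ, ContDiffOn ℝ (⊤ : ℕ∞) y (Ioo a b) →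
      ∀ z ∈ Ioo a b,
        secondOrderOp p (qCoeff p q₀ bf k) (rCoeff p q₀ r₀ bf υ k) y z
          = sGauge bf k z
            * secondOrderOp p (qTilde p q₀ k) (rTilde p q₀ r₀ υ k)
                (fun x => y x / sGauge bf k x) z := by
  intro k hk y hy z hz
  have contDiffAt_two {f : ℝ → ℝ} (hf : ContDiffOn ℝ (⊤ : ℕ∞) f (Ioo a b)) :
      ContDiffAt ℝ 2 f z :=
    (hf.contDiffAt (isOpen_Ioo.mem_nhds hz)).of_le ENat.LEInfty.out
  have hkn : Finset.Icc 1 k ⊆ Finset.Icc 1 n := Finset.Icc_subset_Icc_right (Finset.mem_Icc.1 hk).2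
  rw [rCoeff_eq_rTilde_sub]
  exact statement5_general p _ _ (fun j hj => contDiffAt_two (hb j (hkn hj)))
    (fun j hj => hb0 j (hkn hj) z hz) (contDiffAt_two hy)
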